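/- arXiv:1311.3464 — 2 statements merged into one kernel-verified Lean document; each statement's English description precedes it below -/
import Mathlib

section
/- Let κ > 1 and let φ : ℝⁿ → ℝ be a function such that e^{-φ} is an unconditional probability density, the random vector X with density e^{-φ(x)} is isotropic, and (x_1,...,x_n) ↦ φ(x_1^κ,...,x_n^κ) is convex on the positive orthant ℝⁿ₊. Then for any a ∈ ℝⁿ, Var(a_1²X_1² + ... + a_n²X_n²) ≤ C_κ Σ_{j=1}^n |a_j|⁴, where C_κ depends only on κ. -/
open MeasureTheory ProbabilityTheory Real
open scoped ENNReal

theorem bm_compact (A B : Set ℝ) (hA : IsCompact A) (hB : IsCompact B) (hA0 : A.Nonempty)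
    (hB0 : B.Nonempty) (S : Set ℝ) (hS : ∀ a ∈ A, ∀ b ∈ B, (a + b) / 2 ∈ S) :
    volume A + volume B ≤ 2 * volume S := by
  obtain ⟨a, haA, ha⟩ := hA.exists_isGreatest hA0
  obtain ⟨b, hbB, hb⟩ := hB.exists_isLeast hB0
  set A' : Set ℝ := (fun x => x + b) '' A with hA'
  set B' : Set ℝ := (fun x => a + x) '' B with hB'
  have e1 : volume A' = volume A := by
    rw [hA']; simp [Set.image_add_right, measure_preimage_add_right]
  have e2 : volume B' = volume B := by
    rw [hB']; simp [Set.image_add_left, measure_preimage_add]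
  have hB'm : MeasurableSet B' := by
    have : IsCompact B' := hB.image (by fun_prop)
    exact this.measurableSet
  have hint : volume (A' ∩ B') = 0 := by
    have : A' ∩ B' ⊆ {a + b} := by
      rintro z ⟨⟨x, hx, rfl⟩, ⟨y, hy, hxy⟩⟩
      have h1 := ha hx
      have h2 := hb hy
      simp only [Set.mem_singleton_iff] at *
      linarith
    exact measure_mono_null this (by simp)
  have hun : volume (A' ∪ B') = volume A + volume B := by
    have := measure_union_add_inter (μ := volume) A' hB'm
    rw [hint, e1, e2, add_zero] at this
    exact this
  have hsub : A' ∪ B' ⊆ (fun x => (1/2 : ℝ) * x) ⁻¹' S := by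
    rintro z (⟨x, hx, rfl⟩ | ⟨x, hx, rfl⟩)
    · have := hS x hx b hbB
      simp only [Set.mem_preimage]; convert this using 1; ring
    · have := hS a haA x hx
      simp only [Set.mem_preimage]; convert this using 1; ring
  calc volume A + volume B = volume (A' ∪ B') := hun.symm
    _ ≤ volume ((fun x => (1/2 : ℝ) * x) ⁻¹' S) := measure_mono hsub
    _ = 2 * volume S := by
      rw [Real.volume_preimage_mul_left (by norm_num)]
      norm_num

theorem bm_meas (A B : Set ℝ) (hA : MeasurableSet A) (hB : MeasurableSet B) (hA0 : A.Nonempty)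
    (hB0 : B.Nonempty) (S : Set ℝ) (hS : ∀ a ∈ A, ∀ b ∈ B, (a + b) / 2 ∈ S) :
    volume A + volume B ≤ 2 * volume S := by
  obtain ⟨a0, ha0⟩ := hA0
  obtain ⟨b0, hb0⟩ := hB0
  rw [hA.measure_eq_iSup_isCompact, hB.measure_eq_iSup_isCompact]
  simp only [iSup_and']
  refine ENNReal.biSup_add_biSup_le' ⟨∅, by simp⟩ ⟨∅, by simp⟩ ?_
  rintro K ⟨hK, hKc⟩ L ⟨hL, hLc⟩
  have h1 : volume K ≤ volume (insert a0 K) := measure_mono (Set.subset_insert _ _)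
  have h2 : volume L ≤ volume (insert b0 L) := measure_mono (Set.subset_insert _ _)
  refine (add_le_add h1 h2).trans ?_
  refine bm_compact _ _ (hKc.insert a0) (hLc.insert b0) (Set.insert_nonempty _ _)
    (Set.insert_nonempty _ _) S ?_
  intro a ha b hb
  exact hS a (Set.insert_subset ha0 hK ha) b (Set.insert_subset hb0 hL hb)

theorem layer (f : ℝ → ℝ≥0∞) (hf : Measurable f) (h1 : ∀ x, f x ≤ 1) :
    ∫⁻ x, f x = ∫⁻ t in Set.Ioi (0:ℝ), volume {x | ENNReal.ofReal t < f x} := by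
  have e : ∀ x, ENNReal.ofReal (f x).toReal = f x := fun x =>
    ENNReal.ofReal_toReal (ne_top_of_le_ne_top ENNReal.one_ne_top (h1 x))
  have := lintegral_eq_lintegral_meas_lt (f := fun x => (f x).toReal) (volume : Measure ℝ)
    (Filter.Eventually.of_forall fun x => ENNReal.toReal_nonneg) hf.ennreal_toReal.aemeasurable
  simp only [e] at this
  rw [this]
  refine setLIntegral_congr_fun measurableSet_Ioi ?_
  intro t ht
  simp only
  congr 1
  ext x
  simp only [Set.mem_ofPred_eq]
  rw [ENNReal.ofReal_lt_iff_lt_toReal (le_of_lt ht)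
    (ne_top_of_le_ne_top ENNReal.one_ne_top (h1 x))]

theorem pl_norm (f g h : ℝ → ℝ≥0∞) (hf : Measurable f) (hg : Measurable g) (hh : Measurable h)
    (hfs : ⨆ x, f x = 1) (hgs : ⨆ x, g x = 1)
    (H : ∀ x y, f x * g y ≤ h ((x + y) / 2) ^ 2) :
    (∫⁻ x, f x) + ∫⁻ x, g x ≤ 2 * ∫⁻ x, h x := by
  have f1 : ∀ x, f x ≤ 1 := fun x => hfs ▸ le_iSup f x
  have g1 : ∀ x, g x ≤ 1 := fun x => hgs ▸ le_iSup g x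
  have hle : ∫⁻ x, min (h x) 1 ≤ ∫⁻ x, h x := lintegral_mono fun x => min_le_left _ _
  refine le_trans ?_ (mul_le_mul_right hle 2)
  have hm : Measurable fun x => min (h x) 1 := hh.min measurable_const
  rw [layer f hf f1, layer g hg g1, layer (fun x => min (h x) 1) hm (fun x => min_le_right _ _)]
  have mono_meas : ∀ u : ℝ → ℝ≥0∞, Measurable fun t : ℝ => volume {x | ENNReal.ofReal t < u x} := by
    intro u
    refine Antitone.measurable ?_
    intro s t hst
    refine measure_mono ?_
    intro x hx
    exact lt_of_le_of_lt (ENNReal.ofReal_le_ofReal hst) hx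
  rw [← lintegral_add_left (mono_meas f), ← lintegral_const_mul _ (mono_meas _)]
  refine setLIntegral_mono' measurableSet_Ioi ?_
  intro t ht
  by_cases ht1 : t < 1
  · have ht1' : ENNReal.ofReal t < 1 := by
      rw [← ENNReal.ofReal_one]; exact (ENNReal.ofReal_lt_ofReal_iff one_pos).2 ht1
    refine bm_meas _ _ (measurableSet_lt measurable_const hf) (measurableSet_lt measurable_const hg)
      ?_ ?_ _ ?_
    · obtain ⟨x, hx⟩ := lt_iSup_iff.1 (hfs.symm ▸ ht1')
      exact ⟨x, hx⟩
    · obtain ⟨x, hx⟩ := lt_iSup_iff.1 (hgs.symm ▸ ht1')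
      exact ⟨x, hx⟩
    · intro x hx y hy
      simp only [Set.mem_ofPred_eq] at *
      refine lt_min ?_ ht1'
      by_contra hcon
      have h2 := H x y
      have h3 : h ((x+y)/2) ^ 2 ≤ (ENNReal.ofReal t)^2 := pow_le_pow_left' (not_lt.1 hcon) 2
      have h4 : ENNReal.ofReal t * ENNReal.ofReal t < f x * g y := ENNReal.mul_lt_mul hx hy
      rw [sq (ENNReal.ofReal t)] at h3
      exact absurd (h4.trans_le (h2.trans h3)) (lt_irrefl _)
  · have ht1' : 1 ≤ ENNReal.ofReal t := by
      rw [← ENNReal.ofReal_one]; exact ENNReal.ofReal_le_ofReal (not_lt.1 ht1)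
    have z : ∀ u : ℝ → ℝ≥0∞, (∀ x, u x ≤ 1) → {x | ENNReal.ofReal t < u x} = ∅ := by
      intro u hu
      ext x
      simpa using (hu x).trans ht1'
    rw [z f f1, z g g1]
    simp

theorem amgm (a b c : ℝ≥0∞) (h : a + b ≤ 2 * c) : a * b ≤ c ^ 2 := by
  rcases eq_or_ne c ⊤ with rfl | hc
  · simp
  have hab : a + b ≠ ⊤ := ne_top_of_le_ne_top (by finiteness) h
  have ha : a ≠ ⊤ := fun h => hab (by simp [h])
  have hb : b ≠ ⊤ := fun h => hab (by simp [h])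
  lift a to NNReal using ha
  lift b to NNReal using hb
  lift c to NNReal using hc
  norm_cast at *
  have h' : (a:ℝ) + b ≤ 2 * c := by exact_mod_cast h
  have : (a:ℝ) * b ≤ c ^ 2 := by nlinarith [sq_nonneg ((a:ℝ) - b), a.2, b.2, c.2]
  exact_mod_cast this

theorem pl_bdd (f g h : ℝ → ℝ≥0∞) (hf : Measurable f) (hg : Measurable g) (hh : Measurable h)
    (hfs : ⨆ x, f x ≠ ⊤) (hgs : ⨆ x, g x ≠ ⊤)
    (H : ∀ x y, f x * g y ≤ h ((x + y) / 2) ^ 2) :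
    (∫⁻ x, f x) * ∫⁻ x, g x ≤ (∫⁻ x, h x) ^ 2 := by
  set a := ⨆ x, f x with ha
  set b := ⨆ x, g x with hb
  rcases eq_or_ne a 0 with ha0 | ha0
  · have : ∀ x, f x = 0 := fun x => le_antisymm (ha0 ▸ le_iSup f x) bot_le
    simp [this]
  rcases eq_or_ne b 0 with hb0 | hb0
  · have : ∀ x, g x = 0 := fun x => le_antisymm (hb0 ▸ le_iSup g x) bot_le
    simp [this]
  set c := (a * b) ^ (1/2 : ℝ) with hc
  have hab0 : a * b ≠ 0 := mul_ne_zero ha0 hb0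
  have habt : a * b ≠ ⊤ := ENNReal.mul_ne_top hfs hgs
  have hc2 : c ^ 2 = a * b := by
    rw [hc, ← ENNReal.rpow_natCast, ← ENNReal.rpow_mul]; norm_num
  have hc0 : c ≠ 0 := fun h => hab0 (by rw [← hc2, h]; simp)
  have hct : c ≠ ⊤ := fun h => habt (by rw [← hc2, h]; simp)
  have key := amgm _ _ _ (pl_norm (fun x => a⁻¹ * f x) (fun x => b⁻¹ * g x) (fun x => c⁻¹ * h x)
    (hf.const_mul _) (hg.const_mul _) (hh.const_mul _)
    (by rw [← ENNReal.mul_iSup, ← ha, ENNReal.inv_mul_cancel ha0 hfs])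
    (by rw [← ENNReal.mul_iSup, ← hb, ENNReal.inv_mul_cancel hb0 hgs])
    (by
      intro x y
      calc a⁻¹ * f x * (b⁻¹ * g y) = (a⁻¹ * b⁻¹) * (f x * g y) := by ring
        _ ≤ (a⁻¹ * b⁻¹) * h ((x + y) / 2) ^ 2 := mul_le_mul_right (H x y) _
        _ = (c⁻¹ * h ((x + y) / 2)) ^ 2 := by
          rw [← ENNReal.mul_inv (Or.inl ha0) (Or.inl hfs), ← hc2, mul_pow, ENNReal.inv_pow]))
  rw [lintegral_const_mul _ hf, lintegral_const_mul _ hg, lintegral_const_mul _ hh, mul_pow,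
    ← ENNReal.inv_pow, hc2] at key
  have k2 := mul_le_mul_right key (a * b)
  rw [← mul_assoc (a * b) (a * b)⁻¹, ENNReal.mul_inv_cancel hab0 habt, one_mul] at k2
  refine le_trans (le_of_eq ?_) k2
  calc (∫⁻ x, f x) * ∫⁻ x, g x = (a * a⁻¹) * (b * b⁻¹) * ((∫⁻ x, f x) * ∫⁻ x, g x) := by
        rw [ENNReal.mul_inv_cancel ha0 hfs, ENNReal.mul_inv_cancel hb0 hgs]; simp
    _ = _ := by ring

theorem pl_one (f g h : ℝ → ℝ≥0∞) (hf : Measurable f) (hg : Measurable g) (hh : Measurable h)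
    (H : ∀ x y, f x * g y ≤ h ((x + y) / 2) ^ 2) :
    (∫⁻ x, f x) * ∫⁻ x, g x ≤ (∫⁻ x, h x) ^ 2 := by
  have conv : ∀ u : ℝ → ℝ≥0∞, Measurable u →
      ∫⁻ x, u x = ⨆ N : ℕ, ∫⁻ x, min (u x) N := by
    intro u hu
    rw [← lintegral_iSup (fun N => hu.min measurable_const)
      (fun i j hij x => min_le_min le_rfl (by exact_mod_cast hij))]
    refine lintegral_congr fun x => ?_
    rw [← inf_iSup_eq, ENNReal.iSup_natCast]; simp
  rw [conv f hf, conv g hg]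
  simp only [ENNReal.iSup_mul, ENNReal.mul_iSup, iSup_le_iff]
  intro j i
  refine pl_bdd _ _ h (hf.min measurable_const) (hg.min measurable_const) hh ?_ ?_ ?_
  · exact ne_top_of_le_ne_top (ENNReal.natCast_ne_top i) (iSup_le fun x => min_le_right _ _)
  · exact ne_top_of_le_ne_top (ENNReal.natCast_ne_top j) (iSup_le fun x => min_le_right _ _)
  · intro x y
    exact (mul_le_mul' (min_le_left _ _) (min_le_left _ _)).trans (H x y)

noncomputable def mn (κ x y : ℝ) : ℝ := ((x ^ κ⁻¹ + y ^ κ⁻¹) / 2) ^ κ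

noncomputable def kk (κ x y : ℝ) : ℝ :=
  (x ^ κ⁻¹ * y ^ κ⁻¹ / ((x ^ κ⁻¹ + y ^ κ⁻¹) / 2) ^ 2) ^ (κ - 1)

theorem lintegral_abs (f : ℝ → ℝ≥0∞) :
    ∫⁻ x, f |x| = 2 * ∫⁻ x in Set.Ioi (0:ℝ), f x := by
  rw [← lintegral_add_compl _ (measurableSet_Ioi (a := (0:ℝ))), two_mul]
  congr 1
  · exact setLIntegral_congr_fun measurableSet_Ioi fun x hx => by simp [abs_of_pos (Set.mem_Ioi.1 hx)]
  · rw [Set.compl_Ioi, ← restrict_Iio_eq_restrict_Iic]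
    have h := (Measure.measurePreserving_neg (volume : Measure ℝ)).setLIntegral_comp_preimage_emb
      (MeasurableEquiv.neg ℝ).measurableEmbedding f (Set.Ioi 0)
    rw [← h]
    simp only [Set.neg_preimage, Set.neg_Ioi, neg_zero]
    exact setLIntegral_congr_fun measurableSet_Iio fun x hx => by simp [abs_of_neg (Set.mem_Iio.1 hx)]

theorem lintegral_pow_change (κ : ℝ) (hκ : 0 < κ) (f : ℝ → ℝ≥0∞) :
    ∫⁻ x in Set.Ioi (0:ℝ), f x =
      ∫⁻ u, (Set.Ioi (0:ℝ)).indicator (fun u => ENNReal.ofReal (κ * u ^ (κ - 1)) * f (u ^ κ)) u := by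
  have him : (fun u : ℝ => u ^ κ) '' Set.Ioi 0 = Set.Ioi 0 := by
    ext x
    constructor
    · rintro ⟨u, hu, rfl⟩; exact Real.rpow_pos_of_pos hu _
    · intro hx
      exact ⟨x ^ κ⁻¹, Real.rpow_pos_of_pos hx _, Real.rpow_inv_rpow (le_of_lt hx) hκ.ne'⟩
  have := lintegral_image_eq_lintegral_abs_deriv_mul (s := Set.Ioi (0:ℝ)) (f := fun u : ℝ => u ^ κ)
    (f' := fun u => κ * u ^ (κ - 1)) measurableSet_Ioi
    (fun x hx => (Real.hasDerivAt_rpow_const (Or.inl (ne_of_gt hx))).hasDerivWithinAt)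
    (fun x hx y hy hxy => (Real.rpow_left_inj (le_of_lt hx) (le_of_lt hy) hκ.ne').1 hxy) f
  rw [him] at this
  rw [this, lintegral_indicator measurableSet_Ioi]
  refine setLIntegral_congr_fun measurableSet_Ioi fun x hx => ?_
  have : 0 ≤ κ * x ^ (κ - 1) := mul_nonneg hκ.le (Real.rpow_nonneg (le_of_lt hx) _)
  simp only [abs_of_nonneg this]

theorem pl_half (κ : ℝ) (hκ : 0 < κ) (f g h : ℝ → ℝ≥0∞) (hf : Measurable f) (hg : Measurable g)
    (hh : Measurable h)
    (H : ∀ x y, 0 < x → 0 < y → f x * g y * ENNReal.ofReal (kk κ x y) ≤ h (mn κ x y) ^ 2) :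
    (∫⁻ x, f |x|) * ∫⁻ x, g |x| ≤ (∫⁻ x, h |x|) ^ 2 := by
  rw [lintegral_abs, lintegral_abs, lintegral_abs, lintegral_pow_change κ hκ,
    lintegral_pow_change κ hκ, lintegral_pow_change κ hκ]
  have hm : ∀ u : ℝ → ℝ≥0∞, Measurable u → Measurable fun t : ℝ =>
      (Set.Ioi (0:ℝ)).indicator (fun u' => ENNReal.ofReal (κ * u' ^ (κ - 1)) * u (u' ^ κ)) t := by
    intro u hu
    refine Measurable.indicator ?_ measurableSet_Ioi
    refine Measurable.mul ?_ (hu.comp (by fun_prop))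
    exact ENNReal.measurable_ofReal.comp (by fun_prop)
  have key := pl_one _ _ _ (hm f hf) (hm g hg) (hm h hh) ?_
  · rw [mul_pow, sq (2:ℝ≥0∞)]
    calc _ = (2 * 2 : ℝ≥0∞) * _ := mul_mul_mul_comm _ _ _ _
      _ ≤ _ := mul_le_mul_right key _
  intro u v
  by_cases hu : 0 < u
  swap
  · simp [hu]
  by_cases hv : 0 < v
  swap
  · simp [hv]
  have huv : 0 < (u + v) / 2 := by positivity
  simp only [Set.mem_Ioi, hu, hv, huv, Set.indicator_of_mem]
  set m := (u + v) / 2 with hm'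
  have h1 := H (u ^ κ) (v ^ κ) (by positivity) (by positivity)
  have eu : (u ^ κ) ^ κ⁻¹ = u := Real.rpow_rpow_inv hu.le hκ.ne'
  have ev : (v ^ κ) ^ κ⁻¹ = v := Real.rpow_rpow_inv hv.le hκ.ne'
  have e1 : mn κ (u ^ κ) (v ^ κ) = m ^ κ := by rw [mn, eu, ev]
  have e2 : kk κ (u ^ κ) (v ^ κ) = (u * v / m ^ 2) ^ (κ - 1) := by rw [kk, eu, ev]
  have e3 : (κ * u ^ (κ - 1)) * (κ * v ^ (κ - 1)) =
      (u * v / m ^ 2) ^ (κ - 1) * (κ * m ^ (κ - 1)) ^ 2 := by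
    have hmm : (m ^ 2) ^ (κ - 1) = (m ^ (κ - 1)) ^ 2 := by
      rw [sq, Real.mul_rpow huv.le huv.le, sq]
    rw [Real.div_rpow (by positivity) (by positivity), Real.mul_rpow hu.le hv.le, hmm]
    have : m ^ (κ - 1) ≠ 0 := (Real.rpow_pos_of_pos huv _).ne'
    field_simp
  rw [e1, e2] at h1
  calc ENNReal.ofReal (κ * u ^ (κ - 1)) * f (u ^ κ) * (ENNReal.ofReal (κ * v ^ (κ - 1)) * g (v ^ κ))
      = f (u ^ κ) * g (v ^ κ) *
        (ENNReal.ofReal (κ * u ^ (κ - 1)) * ENNReal.ofReal (κ * v ^ (κ - 1))) := by ring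
    _ = f (u ^ κ) * g (v ^ κ) * ENNReal.ofReal ((u * v / m ^ 2) ^ (κ - 1)) *
        ENNReal.ofReal (κ * m ^ (κ - 1)) ^ 2 := by
        rw [← ENNReal.ofReal_mul (by positivity), e3, ENNReal.ofReal_mul (by positivity),
          ENNReal.ofReal_pow (by positivity)]
        ring
    _ ≤ h (m ^ κ) ^ 2 * ENNReal.ofReal (κ * m ^ (κ - 1)) ^ 2 := by gcongr
    _ = _ := by ring

theorem lintegral_cons (n : ℕ) (f : (Fin (n + 1) → ℝ) → ℝ≥0∞) (hf : Measurable f) :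
    ∫⁻ x : Fin (n + 1) → ℝ, f (fun i => |x i|) = ∫⁻ t : ℝ, ∫⁻ x : Fin n → ℝ, f (Fin.cons |t| fun i => |x i|) := by
  have h := (volume_preserving_piFinSuccAbove (fun _ : Fin (n + 1) => ℝ) 0).symm
  have hf' : Measurable fun x : Fin (n + 1) → ℝ => f (fun i => |x i|) := hf.comp (by fun_prop)
  rw [← h.lintegral_comp hf', Measure.volume_eq_prod]
  have hm : Measurable fun a : ℝ × (Fin n → ℝ) => f fun i =>
      |(MeasurableEquiv.piFinSuccAbove (fun _ : Fin (n + 1) => ℝ) 0).symm a i| :=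
    hf'.comp (MeasurableEquiv.measurable _)
  rw [lintegral_prod _ hm.aemeasurable]
  refine lintegral_congr fun t => lintegral_congr fun x => ?_
  congr 1
  ext i
  refine Fin.cases ?_ (fun j => ?_) i <;> simp [MeasurableEquiv.piFinSuccAbove]

theorem measurable_cons_lint (n : ℕ) (f : (Fin (n + 1) → ℝ) → ℝ≥0∞) (hf : Measurable f) :
    Measurable fun t : ℝ => ∫⁻ x : Fin n → ℝ, f (Fin.cons t fun i => |x i|) := by
  have : Measurable fun p : ℝ × (Fin n → ℝ) => f (Fin.cons p.1 fun i => |p.2 i|) := by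
    refine hf.comp (measurable_pi_lambda _ fun i => ?_)
    refine Fin.cases ?_ (fun j => ?_) i
    · simp only [Fin.cons_zero]; fun_prop
    · simp only [Fin.cons_succ]; fun_prop
  exact this.lintegral_prod_right'

theorem measurable_cons_right (n : ℕ) (f : (Fin (n + 1) → ℝ) → ℝ≥0∞) (hf : Measurable f) (t : ℝ) :
    Measurable fun x : Fin n → ℝ => f (Fin.cons t x) := by
  refine hf.comp (measurable_pi_lambda _ fun i => ?_)
  refine Fin.cases ?_ (fun j => ?_) i
  · simp only [Fin.cons_zero]; fun_prop
  · simp only [Fin.cons_succ]; fun_prop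

theorem pl_multi (κ : ℝ) (hκ : 0 < κ) (n : ℕ) : ∀ (f g h : (Fin n → ℝ) → ℝ≥0∞),
    Measurable f → Measurable g → Measurable h →
    (∀ x y, (∀ i, 0 < x i) → (∀ i, 0 < y i) →
      f x * g y * ∏ i, ENNReal.ofReal (kk κ (x i) (y i)) ≤ h (fun i => mn κ (x i) (y i)) ^ 2) →
    (∫⁻ x : Fin n → ℝ, f (fun i => |x i|)) * ∫⁻ x : Fin n → ℝ, g (fun i => |x i|) ≤ (∫⁻ x : Fin n → ℝ, h (fun i => |x i|)) ^ 2 := by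
  induction n with
  | zero =>
    intro f g h hf hg hh H
    have := H 0 0 (fun i => i.elim0) (fun i => i.elim0)
    simp only [Finset.univ_eq_empty, Finset.prod_empty, mul_one] at this
    have e : ∀ u : (Fin 0 → ℝ) → ℝ≥0∞, ∫⁻ x : Fin 0 → ℝ, u (fun i => |x i|) = u 0 := by
      intro u
      have : ∀ x : Fin 0 → ℝ, u (fun i => |x i|) = u 0 := fun x =>
        congrArg u (Subsingleton.elim _ _)
      simp only [this]
      simp [volume_pi]
    rw [e, e, e]
    convert this
  | succ n ih =>
    intro f g h hf hg hh H
    rw [lintegral_cons n f hf, lintegral_cons n g hg, lintegral_cons n h hh]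
    refine pl_half κ hκ (fun t => ∫⁻ x : Fin n → ℝ, f (Fin.cons t fun i => |x i|))
      (fun t => ∫⁻ x : Fin n → ℝ, g (Fin.cons t fun i => |x i|))
      (fun t => ∫⁻ x : Fin n → ℝ, h (Fin.cons t fun i => |x i|))
      (measurable_cons_lint n f hf) (measurable_cons_lint n g hg) (measurable_cons_lint n h hh) ?_
    intro t s ht hs
    have := ih (fun x => ENNReal.ofReal (kk κ t s) * f (Fin.cons t x)) (fun x => g (Fin.cons s x))
      (fun x => h (Fin.cons (mn κ t s) x)) ((measurable_cons_right n f hf t).const_mul _)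
      (measurable_cons_right n g hg s) (measurable_cons_right n h hh _) ?_
    · have hmt : Measurable fun x : Fin n → ℝ => f (Fin.cons t fun i => |x i|) :=
        (measurable_cons_right n f hf t).comp (by fun_prop)
      rw [lintegral_const_mul _ hmt] at this
      refine le_trans (le_of_eq ?_) this
      ring
    · intro x y hx hy
      have := H (Fin.cons t x) (Fin.cons s y) (fun i => Fin.cases (by simpa using ht) (by simpa using hx) i)
        (fun i => Fin.cases (by simpa using hs) (by simpa using hy) i)
      rw [Fin.prod_univ_succ] at this
      simp only [Fin.cons_zero, Fin.cons_succ] at this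
      have e : (fun i => mn κ ((Fin.cons t x : Fin (n + 1) → ℝ) i) ((Fin.cons s y : Fin (n + 1) → ℝ) i))
          = Fin.cons (mn κ t s) (fun i => mn κ (x i) (y i)) := by
        ext i
        refine Fin.cases ?_ (fun j => ?_) i <;> simp
      rw [e] at this
      refine le_trans (le_of_eq ?_) this
      ring

theorem pow_diff (p ρ : ℝ) (hp : 1 ≤ p) (h0 : 0 ≤ ρ) (h1 : ρ ≤ 1) :
    (1 + ρ) ^ p - (1 - ρ) ^ p ≤ (2 ^ p + p) * ρ := by
  have a := (convexOn_rpow hp).2 (show (1:ℝ) ∈ Set.Ici 0 by simp) (show (2:ℝ) ∈ Set.Ici 0 by simp)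
    (show 0 ≤ 1 - ρ by linarith) h0 (by ring)
  have b := one_add_mul_self_le_rpow_one_add (s := -ρ) (by linarith) hp
  simp only [smul_eq_mul, mul_one, Real.one_rpow] at a
  have e : (1 - ρ + ρ * 2) = 1 + ρ := by ring
  rw [e] at a
  have e2 : (1 + -ρ) = 1 - ρ := by ring
  rw [e2] at b
  nlinarith

theorem kk_exp (κ u v r M : ℝ) (hκ : 1 < κ) (hM : 0 < M) (hr : |r| < 1)
    (hu : u = M * (1 + r)) (hv : v = M * (1 - r)) :
    (u * v / M ^ 2) ^ (κ - 1) ≤ Real.exp (-((κ - 1) * r ^ 2)) := by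
  have e : u * v / M ^ 2 = 1 - r ^ 2 := by rw [hu, hv]; field_simp; ring
  have hr2 : r ^ 2 < 1 := by rw [← sq_abs]; nlinarith [abs_nonneg r]
  rw [e]
  calc (1 - r ^ 2) ^ (κ - 1) ≤ (Real.exp (-r ^ 2)) ^ (κ - 1) := by
        refine Real.rpow_le_rpow (by linarith) ?_ (by linarith)
        have := Real.add_one_le_exp (-r ^ 2)
        linarith
    _ = _ := by rw [← Real.exp_mul]; congr 1; ring

theorem exists_rM (κ x y : ℝ) (hκ : 1 < κ) (hx : 0 < x) (hy : 0 < y) :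
    ∃ M r : ℝ, 0 < M ∧ |r| < 1 ∧ mn κ x y = M ^ κ ∧ x = M ^ κ * (1 + r) ^ κ ∧
      y = M ^ κ * (1 - r) ^ κ ∧ kk κ x y ≤ Real.exp (-((κ - 1) * r ^ 2)) := by
  set u := x ^ κ⁻¹ with hu
  set v := y ^ κ⁻¹ with hv
  have hu0 : 0 < u := Real.rpow_pos_of_pos hx _
  have hv0 : 0 < v := Real.rpow_pos_of_pos hy _
  have hκ0 : κ ≠ 0 := by linarith
  have hr : |(u - v) / (u + v)| < 1 := by
    rw [abs_div, abs_of_pos (by positivity : 0 < u + v), div_lt_one (by positivity), abs_lt]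
    constructor <;> linarith
  have eu : u = (u + v) / 2 * (1 + (u - v) / (u + v)) := by field_simp; ring
  have ev : v = (u + v) / 2 * (1 - (u - v) / (u + v)) := by field_simp; ring
  have hr' := abs_lt.1 hr
  refine ⟨(u + v) / 2, (u - v) / (u + v), by positivity, hr, rfl, ?_, ?_, ?_⟩
  · rw [← Real.mul_rpow (by positivity) (by linarith), ← eu, hu, Real.rpow_inv_rpow hx.le hκ0]
  · rw [← Real.mul_rpow (by positivity) (by linarith), ← ev, hv, Real.rpow_inv_rpow hy.le hκ0]
  · exact kk_exp κ u v _ _ hκ (by positivity) hr eu ev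

theorem scalar_ineq (κ x y N b : ℝ) (hκ : 1 < κ) (hx : 0 < x) (hy : 0 < y) (hN : 0 ≤ N)
    (hb : 0 ≤ b) :
    Real.exp (b * min (x ^ 2) N) * Real.exp (-(b * min (y ^ 2) N)) * kk κ x y ≤
      Real.exp (b ^ 2 * (min ((mn κ x y) ^ 2) N) ^ 2 * ((2 ^ (2 * κ) + 2 * κ) ^ 2 / (4 * (κ - 1)))) := by
  obtain ⟨M, r, hM, hr, em, ex, ey, hk⟩ := exists_rM κ x y hκ hx hy
  have hc : 0 < κ - 1 := by linarith
  set L : ℝ := 2 ^ (2 * κ) + 2 * κ with hL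
  set z := mn κ x y with hz
  set T := min (z ^ 2) N with hT
  have hT0 : 0 ≤ T := le_min (sq_nonneg _) hN
  set ρ := |r| with hρ
  have hρ0 : 0 ≤ ρ := abs_nonneg r
  have hrr := abs_le.1 (le_refl |r|)
  have sqp : ∀ w : ℝ, 0 ≤ w → (w ^ κ) ^ 2 = w ^ (2 * κ) := by
    intro w hw
    rw [← Real.rpow_natCast, ← Real.rpow_mul hw]; congr 1; push_cast; ring
  have hr' := abs_lt.1 hr
  have ex2 : x ^ 2 = z ^ 2 * (1 + r) ^ (2 * κ) := by
    rw [ex, mul_pow, ← em, sqp _ (by linarith)]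
  have ey2 : y ^ 2 = z ^ 2 * (1 - r) ^ (2 * κ) := by
    rw [ey, mul_pow, ← em, sqp _ (by linarith)]
  have h1 : (1 + r) ^ (2 * κ) ≤ (1 + ρ) ^ (2 * κ) :=
    Real.rpow_le_rpow (by linarith) (by linarith) (by linarith)
  have h2 : (1 - ρ) ^ (2 * κ) ≤ (1 - r) ^ (2 * κ) :=
    Real.rpow_le_rpow (by linarith) (by linarith) (by linarith)
  have h3 : 1 ≤ (1 + ρ) ^ (2 * κ) := Real.one_le_rpow (by linarith) (by linarith)
  have h4 : (1 - ρ) ^ (2 * κ) ≤ 1 := Real.rpow_le_one (by linarith) (by linarith) (by linarith)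
  have h40 : 0 ≤ (1 - ρ) ^ (2 * κ) := Real.rpow_nonneg (by linarith) _
  have tx : min (x ^ 2) N ≤ T * (1 + ρ) ^ (2 * κ) := by
    rw [hT, min_mul_of_nonneg _ _ (by linarith)]
    refine min_le_min ?_ ?_
    · rw [ex2]; exact mul_le_mul_of_nonneg_left h1 (sq_nonneg _)
    · nlinarith
  have ty : T * (1 - ρ) ^ (2 * κ) ≤ min (y ^ 2) N := by
    rw [hT, min_mul_of_nonneg _ _ h40]
    refine min_le_min ?_ ?_
    · rw [ey2]; exact mul_le_mul_of_nonneg_left h2 (sq_nonneg _)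
    · nlinarith
  have hd : min (x ^ 2) N - min (y ^ 2) N ≤ T * (L * ρ) := by
    have := pow_diff (2 * κ) ρ (by linarith) hρ0 hr.le
    have := mul_le_mul_of_nonneg_left this hT0
    rw [mul_sub] at this
    linarith
  calc _ ≤ Real.exp (b * min (x ^ 2) N) * Real.exp (-(b * min (y ^ 2) N)) *
        Real.exp (-((κ - 1) * r ^ 2)) := by gcongr
    _ = Real.exp (b * (min (x ^ 2) N - min (y ^ 2) N) - (κ - 1) * ρ ^ 2) := by
      rw [← Real.exp_add, ← Real.exp_add, hρ, sq_abs]; congr 1; ring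
    _ ≤ _ := by
      refine Real.exp_le_exp.2 ?_
      have h5 := mul_le_mul_of_nonneg_left hd hb
      have h6 : b * (T * (L * ρ)) - (κ - 1) * ρ ^ 2 ≤ b ^ 2 * T ^ 2 * (L ^ 2 / (4 * (κ - 1))) := by
        rw [← sub_nonneg]
        have : b ^ 2 * T ^ 2 * (L ^ 2 / (4 * (κ - 1))) - (b * (T * (L * ρ)) - (κ - 1) * ρ ^ 2) =
          (b * T * L - 2 * (κ - 1) * ρ) ^ 2 / (4 * (κ - 1)) := by field_simp; ring
        rw [this]; positivity
      linarith

theorem kk_le_one (κ x y : ℝ) (hκ : 1 < κ) (hx : 0 < x) (hy : 0 < y) : kk κ x y ≤ 1 := by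
  obtain ⟨M, r, hM, hr, em, ex, ey, hk⟩ := exists_rM κ x y hκ hx hy
  refine hk.trans (Real.exp_le_one_iff.2 ?_)
  have : 0 ≤ (κ - 1) * r ^ 2 := mul_nonneg (by linarith) (sq_nonneg _)
  linarith

theorem kk_nonneg (κ x y : ℝ) (hx : 0 < x) (hy : 0 < y) : 0 ≤ kk κ x y := by
  unfold kk; positivity

theorem le_mn (κ x y : ℝ) (hκ : 1 < κ) (hx : 0 < x) (hy : 0 < y) : x ≤ 2 ^ κ * mn κ x y := by
  unfold mn
  rw [← Real.mul_rpow (by norm_num) (by positivity)]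
  calc x = (x ^ κ⁻¹) ^ κ := (Real.rpow_inv_rpow hx.le (by linarith)).symm
    _ ≤ _ := Real.rpow_le_rpow (by positivity)
      (by have : 0 < y ^ κ⁻¹ := by positivity
          linarith) (by linarith)

theorem calculus {Ω : Type} [MeasureSpace Ω] [IsProbabilityMeasure (ℙ : Measure Ω)]
    (g Q : Ω → ℝ) (hg : Measurable g) (hQ : Measurable Q) (B : ℝ)
    (hgB : ∀ ω, |g ω| ≤ B) (hQB : ∀ ω, |Q ω| ≤ B)
    (H : ∀ s : ℝ, 0 < s → (∫⁻ ω, ENNReal.ofReal (Real.exp (s * g ω))) *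
      (∫⁻ ω, ENNReal.ofReal (Real.exp (-(s * g ω)))) ≤
      (∫⁻ ω, ENNReal.ofReal (Real.exp (s ^ 2 * Q ω))) ^ 2) :
    variance g ℙ ≤ 2 * ∫ ω, Q ω := by
  have hB : 0 ≤ B := by
    obtain ⟨ω⟩ : Nonempty Ω := nonempty_of_isProbabilityMeasure (ℙ : Measure Ω)
    exact (abs_nonneg _).trans (hgB ω)
  have bint : ∀ (f : Ω → ℝ) (C : ℝ), Measurable f → (∀ ω, |f ω| ≤ C) → Integrable f ℙ := by
    intro f C hf hC
    exact Integrable.of_bound hf.aestronglyMeasurable C (Filter.Eventually.of_forall hC)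
  have eint : ∀ (f : Ω → ℝ) (C : ℝ), Measurable f → (∀ ω, |f ω| ≤ C) →
      Integrable (fun ω => Real.exp (f ω)) ℙ := by
    intro f C hf hC
    refine bint _ (Real.exp C) (by fun_prop) fun ω => ?_
    rw [abs_of_pos (Real.exp_pos _)]
    exact Real.exp_le_exp.2 ((le_abs_self _).trans (hC ω))
  have conv : ∀ (f : Ω → ℝ) (C : ℝ), Measurable f → (∀ ω, |f ω| ≤ C) →
      ∫⁻ ω, ENNReal.ofReal (Real.exp (f ω)) = ENNReal.ofReal (∫ ω, Real.exp (f ω)) := by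
    intro f C hf hC
    rw [ofReal_integral_eq_lintegral_ofReal (eint f C hf hC)
      (Filter.Eventually.of_forall fun ω => (Real.exp_pos _).le)]
  set m := ∫ ω, g ω with hm
  have hmB : |m| ≤ B := by
    have := norm_integral_le_of_norm_le_const (μ := (ℙ : Measure Ω)) (f := g) (C := B)
      (Filter.Eventually.of_forall hgB)
    simpa using this
  have hd : ∀ ω, |g ω - m| ≤ 2 * B := fun ω => by
    have := abs_sub (g ω) m
    linarith [hgB ω]
  have igm : Integrable (fun ω => g ω - m) ℙ := bint _ (2 * B) (by fun_prop) hd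
  have igm2 : Integrable (fun ω => (g ω - m) ^ 2) ℙ := bint _ ((2 * B) ^ 2) (by fun_prop) fun ω => by
    rw [abs_pow]; exact pow_le_pow_left₀ (abs_nonneg _) (hd ω) 2
  have hV : variance g ℙ = ∫ ω, (g ω - m) ^ 2 := variance_eq_integral hg.aemeasurable
  have hi0 : ∫ ω, (g ω - m) = 0 := by
    rw [integral_sub (bint g B hg hgB) (integrable_const _)]; simp [hm]
  set V := ∫ ω, (g ω - m) ^ 2 with hVd
  rw [hV]
  -- lower bound
  have low : ∀ s : ℝ, |s| * (2 * B) ≤ 1 →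
      1 + s ^ 2 * V / 2 - |s| ^ 3 * (2 * B) ^ 3 ≤ ∫ ω, Real.exp (s * (g ω - m)) := by
    intro s hs
    have e1 : ∫ ω, (1 + s * (g ω - m) + s ^ 2 / 2 * (g ω - m) ^ 2 - |s| ^ 3 * (2 * B) ^ 3) =
        1 + s ^ 2 * V / 2 - |s| ^ 3 * (2 * B) ^ 3 := by
      have j1 : Integrable (fun ω => 1 + s * (g ω - m)) ℙ :=
        (integrable_const _).add (igm.const_mul s)
      have j2 : Integrable (fun ω => 1 + s * (g ω - m) + s ^ 2 / 2 * (g ω - m) ^ 2) ℙ :=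
        j1.add (igm2.const_mul _)
      rw [integral_sub j2 (integrable_const _), integral_add j1
        (igm2.const_mul _), integral_add (integrable_const _) (igm.const_mul s),
        integral_const_mul, integral_const_mul, hi0, ← hVd]
      simp; ring
    rw [← e1]
    refine integral_mono ((((integrable_const _).add (igm.const_mul s)).add
      (igm2.const_mul _)).sub (integrable_const _)) (eint _ (|s| * (2 * B)) (by fun_prop) fun ω => ?_) ?_
    · rw [abs_mul]; exact mul_le_mul_of_nonneg_left (hd ω) (abs_nonneg _)
    · intro ω
      have hle : |s * (g ω - m)| ≤ |s| * (2 * B) := by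
        rw [abs_mul]; exact mul_le_mul_of_nonneg_left (hd ω) (abs_nonneg _)
      have := Real.exp_bound (hle.trans hs) (n := 3) (by norm_num)
      have h3 : |s * (g ω - m)| ^ 3 ≤ |s| ^ 3 * (2 * B) ^ 3 := by
        rw [← mul_pow]; exact pow_le_pow_left₀ (abs_nonneg _) hle 3
      have h0 : 0 ≤ |s * (g ω - m)| ^ 3 := by positivity
      simp [Finset.sum_range_succ, Nat.factorial] at this
      rw [← abs_mul] at this
      have := (abs_le.1 this).1
      have e5 : (s * (g ω - m)) ^ 2 / 2 = s ^ 2 / 2 * (g ω - m) ^ 2 := by ring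
      rw [e5] at this
      simp only
      linarith
  have main : ∀ s : ℝ, 0 < s → s * (2 * B) ≤ 1 → s ^ 2 * B ≤ 1 →
      V / 2 - s * (2 * B) ^ 3 ≤ (∫ ω, Q ω) + s ^ 2 * B ^ 2 := by
    intro s hs hs1 hs2
    have h := H s hs
    have bs : ∀ ω, |s * g ω| ≤ s * B := fun ω => by
      rw [abs_mul, abs_of_pos hs]; exact mul_le_mul_of_nonneg_left (hgB ω) hs.le
    have bQ : ∀ ω, |s ^ 2 * Q ω| ≤ s ^ 2 * B := fun ω => by
      rw [abs_mul, abs_of_pos (by positivity)]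
      exact mul_le_mul_of_nonneg_left (hQB ω) (by positivity)
    rw [conv (fun ω => s * g ω) (s * B) (by fun_prop) bs,
      conv (fun ω => -(s * g ω)) (s * B) (by fun_prop) (fun ω => by rw [abs_neg]; exact bs ω),
      conv (fun ω => s ^ 2 * Q ω) (s ^ 2 * B) (by fun_prop) bQ,
      ← ENNReal.ofReal_mul (integral_nonneg fun ω => (Real.exp_pos _).le),
      ← ENNReal.ofReal_pow (integral_nonneg fun ω => (Real.exp_pos _).le),
      ENNReal.ofReal_le_ofReal_iff (by positivity)] at h
    have e1 : ∫ ω, Real.exp (s * g ω) = Real.exp (s * m) * ∫ ω, Real.exp (s * (g ω - m)) := by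
      rw [← integral_const_mul]; congr 1; ext ω; rw [← Real.exp_add]; congr 1; ring
    have e2 : ∫ ω, Real.exp (-(s * g ω)) =
        Real.exp (-(s * m)) * ∫ ω, Real.exp ((-s) * (g ω - m)) := by
      rw [← integral_const_mul]; congr 1; ext ω; rw [← Real.exp_add]; congr 1; ring
    have e3 : Real.exp (s * m) * Real.exp (-(s * m)) = 1 := by rw [← Real.exp_add]; simp
    rw [e1, e2, mul_mul_mul_comm, e3, one_mul] at h
    have l1 := low s (by rw [abs_of_pos hs]; exact hs1)
    have l2 := low (-s) (by rw [abs_neg, abs_of_pos hs]; exact hs1)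
    rw [abs_neg, neg_sq] at l2
    rw [abs_of_pos hs] at l1 l2
    have up : ∫ ω, Real.exp (s ^ 2 * Q ω) ≤ 1 + s ^ 2 * (∫ ω, Q ω) + s ^ 4 * B ^ 2 := by
      have iQ := bint Q B hQ hQB
      have : ∫ ω, (1 + s ^ 2 * Q ω + s ^ 4 * B ^ 2) = 1 + s ^ 2 * (∫ ω, Q ω) + s ^ 4 * B ^ 2 := by
        have j1 : Integrable (fun ω => 1 + s ^ 2 * Q ω) ℙ :=
          (integrable_const _).add (iQ.const_mul _)
        rw [integral_add j1 (integrable_const _),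
          integral_add (integrable_const _) (iQ.const_mul _), integral_const_mul]
        simp
      rw [← this]
      refine integral_mono (eint _ _ (by fun_prop) bQ)
        (((integrable_const _).add (iQ.const_mul _)).add (integrable_const _)) fun ω => ?_
      have := Real.abs_exp_sub_one_sub_id_le ((bQ ω).trans hs2)
      have h1 := (abs_le.1 this).2
      have h2 : (s ^ 2 * Q ω) ^ 2 ≤ s ^ 4 * B ^ 2 := by
        rw [← sq_abs]
        calc |s ^ 2 * Q ω| ^ 2 ≤ (s ^ 2 * B) ^ 2 := pow_le_pow_left₀ (abs_nonneg _) (bQ ω) 2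
          _ = _ := by ring
      simp only
      linarith
    set A := 1 + s ^ 2 * V / 2 - s ^ 3 * (2 * B) ^ 3
    set D := ∫ ω, Real.exp (s ^ 2 * Q ω)
    have hD : 0 ≤ D := integral_nonneg fun ω => (Real.exp_pos _).le
    have hAD : A ≤ D := by
      by_contra hcon
      push Not at hcon
      have hA : 0 < A := hD.trans_lt hcon
      have := mul_le_mul l1 l2 hA.le (hA.le.trans l1)
      nlinarith
    have hfin : s ^ 2 * (V / 2 - s * (2 * B) ^ 3) ≤ s ^ 2 * ((∫ ω, Q ω) + s ^ 2 * B ^ 2) := by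
      have := hAD.trans up
      simp only [A] at this
      nlinarith
    exact le_of_mul_le_mul_left hfin (by positivity)
  have t1 : Filter.Tendsto (fun s : ℝ => V / 2 - s * (2 * B) ^ 3) (nhdsWithin 0 (Set.Ioi 0))
      (nhds (V / 2)) := by
    have : Continuous fun s : ℝ => V / 2 - s * (2 * B) ^ 3 := by fun_prop
    have h := this.tendsto 0
    simp only [zero_mul, sub_zero] at h
    exact h.mono_left nhdsWithin_le_nhds
  have t2 : Filter.Tendsto (fun s : ℝ => (∫ ω, Q ω) + s ^ 2 * B ^ 2) (nhdsWithin 0 (Set.Ioi 0))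
      (nhds (∫ ω, Q ω)) := by
    have : Continuous fun s : ℝ => (∫ ω, Q ω) + s ^ 2 * B ^ 2 := by fun_prop
    have h := this.tendsto 0
    simp only [ne_eq, OfNat.ofNat_ne_zero, not_false_eq_true, zero_pow, zero_mul, add_zero] at h
    exact h.mono_left nhdsWithin_le_nhds
  have c1 : ∀ᶠ s : ℝ in nhdsWithin 0 (Set.Ioi 0), s * (2 * B) ≤ 1 := by
    have : Continuous fun s : ℝ => s * (2 * B) := by fun_prop
    refine Filter.Eventually.filter_mono nhdsWithin_le_nhds ?_
    exact (this.tendsto 0).eventually_le_const (by simp)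
  have c2 : ∀ᶠ s : ℝ in nhdsWithin 0 (Set.Ioi 0), s ^ 2 * B ≤ 1 := by
    have : Continuous fun s : ℝ => s ^ 2 * B := by fun_prop
    refine Filter.Eventually.filter_mono nhdsWithin_le_nhds ?_
    exact (this.tendsto 0).eventually_le_const (by simp)
  have fin : V / 2 ≤ ∫ ω, Q ω := by
    refine le_of_tendsto_of_tendsto t1 t2 ?_
    filter_upwards [c1, c2, self_mem_nhdsWithin] with s h1 h2 h3
    exact main s h3 h1 h2
  linarith

noncomputable def ww {n : ℕ} (φ : (Fin n → ℝ) → ℝ) : (Fin n → ℝ) → ℝ≥0∞ :=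
  {x : Fin n → ℝ | ∀ i, 0 < x i}.indicator (fun x => ENNReal.ofReal (Real.exp (-φ x)))

theorem isOpen_orth (n : ℕ) : IsOpen {x : Fin n → ℝ | ∀ i, 0 < x i} := by
  have : {x : Fin n → ℝ | ∀ i, 0 < x i} = ⋂ i, {x | 0 < x i} := by ext; simp
  rw [this]
  exact isOpen_iInter_of_finite fun i => isOpen_lt continuous_const (continuous_apply i)

theorem ww_meas (κ : ℝ) (hκ : 1 < κ) {n : ℕ} (φ : (Fin n → ℝ) → ℝ)
    (hc : ConvexOn ℝ {x : Fin n → ℝ | ∀ i, 0 ≤ x i} (fun x => φ (fun i => x i ^ κ))) :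
    Measurable (ww φ) := by
  have hO := isOpen_orth n
  set O := {x : Fin n → ℝ | ∀ i, 0 < x i} with hOd
  have hcO : Convex ℝ O := by
    have : O = Set.pi Set.univ fun _ => Set.Ioi (0:ℝ) := by ext; simp [hOd]
    rw [this]
    exact convex_pi fun i _ => convex_Ioi 0
  have c1 : ContinuousOn (fun x : Fin n → ℝ => φ (fun i => x i ^ κ)) O :=
    (hc.subset (fun x hx i => (hx i).le) hcO).continuousOn hO
  have c2 : ContinuousOn (fun x : Fin n → ℝ => fun i => x i ^ κ⁻¹) O := by
    refine Continuous.continuousOn ?_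
    refine continuous_pi fun i => ?_
    exact (continuous_apply i).rpow_const fun x => Or.inr (by positivity)
  have c3 : ContinuousOn φ O := by
    refine (c1.comp c2 (fun x hx i => Real.rpow_pos_of_pos (hx i) _)).congr ?_
    intro x hx
    simp only [Function.comp]
    congr 1
    ext i
    exact (Real.rpow_inv_rpow (hx i).le (by linarith)).symm
  have c4 : ContinuousOn (fun x => ENNReal.ofReal (Real.exp (-φ x))) O :=
    ENNReal.continuous_ofReal.comp_continuousOn (Real.continuous_exp.comp_continuousOn c3.neg)
  unfold ww
  classical
  rw [← Set.piecewise_eq_indicator]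
  exact ContinuousOn.measurable_piecewise c4 continuousOn_const hO.measurableSet

theorem ww_ae {n : ℕ} (φ : (Fin n → ℝ) → ℝ)
    (hu : ∀ ε : Fin n → ℝ, (∀ i, ε i = 1 ∨ ε i = -1) → ∀ x, φ (fun i => ε i * x i) = φ x) :
    (fun x => ENNReal.ofReal (Real.exp (-φ x))) =ᵐ[volume] fun x => ww φ (fun i => |x i|) := by
  have : ∀ᵐ x : Fin n → ℝ, ∀ i, x i ≠ 0 := by
    rw [ae_all_iff]
    intro i
    exact Measure.ae_eval_ne (fun _ : Fin n => (volume : Measure ℝ)) i 0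
  filter_upwards [this] with x hx
  have hpos : (fun i => |x i|) ∈ {x : Fin n → ℝ | ∀ i, 0 < x i} := fun i => abs_pos.2 (hx i)
  rw [ww, Set.indicator_of_mem hpos]
  have h := hu (fun i => if 0 ≤ x i then 1 else -1) (fun i => by by_cases h : 0 ≤ x i <;> simp [h]) x
  have e : (fun i => (if 0 ≤ x i then (1:ℝ) else -1) * x i) = fun i => |x i| := by
    ext i
    by_cases h : 0 ≤ x i
    · simp [h, abs_of_nonneg h]
    · simp [h, abs_of_neg (not_le.1 h)]
  rw [e] at h
  rw [h]

theorem core (κ : ℝ) (hκ : 1 < κ) {n : ℕ} {Ω : Type} [MeasureSpace Ω]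
    (X : Ω → Fin n → ℝ) (φ : (Fin n → ℝ) → ℝ) (hX : Measurable X)
    (hmap : Measure.map X ℙ = (volume : Measure (Fin n → ℝ)).withDensity
          (fun x => ENNReal.ofReal (Real.exp (-φ x))))
    (hu : ∀ ε : Fin n → ℝ, (∀ i, ε i = 1 ∨ ε i = -1) → ∀ x, φ (fun i => ε i * x i) = φ x)
    (hc : ConvexOn ℝ {x : Fin n → ℝ | ∀ i, 0 ≤ x i} (fun x => φ (fun i => x i ^ κ)))
    (F G H : (Fin n → ℝ) → ℝ≥0∞) (hF : Measurable F) (hG : Measurable G) (hH : Measurable H)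
    (hFGH : ∀ x y, (∀ i, 0 < x i) → (∀ i, 0 < y i) →
      F x * G y * ∏ i, ENNReal.ofReal (kk κ (x i) (y i)) ≤ H (fun i => mn κ (x i) (y i)) ^ 2) :
    (∫⁻ ω, F (fun i => |X ω i|)) * (∫⁻ ω, G (fun i => |X ω i|)) ≤
      (∫⁻ ω, H (fun i => |X ω i|)) ^ 2 := by
  have hw := ww_meas κ hκ φ hc
  have conv : ∀ U : (Fin n → ℝ) → ℝ≥0∞, Measurable U →
      ∫⁻ ω, U (fun i => |X ω i|) = ∫⁻ x : Fin n → ℝ, (ww φ * U) (fun i => |x i|) := by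
    intro U hU
    have hU' : Measurable fun x : Fin n → ℝ => U (fun i => |x i|) := hU.comp (by fun_prop)
    have hw' : Measurable fun x : Fin n → ℝ => ww φ (fun i => |x i|) := hw.comp (by fun_prop)
    rw [← lintegral_map (f := fun x : Fin n → ℝ => U (fun i => |x i|)) hU' hX, hmap,
      withDensity_congr_ae (ww_ae φ hu), lintegral_withDensity_eq_lintegral_mul _ hw' hU']
    rfl
  rw [conv F hF, conv G hG, conv H hH]
  refine pl_multi κ (by linarith) n _ _ _ (hw.mul hF) (hw.mul hG) (hw.mul hH) ?_
  intro x y hx hy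
  have hm : ∀ i, 0 < mn κ (x i) (y i) := fun i => by
    have h1 := hx i
    have h2 := hy i
    unfold mn; positivity
  have hww : ww φ x * ww φ y ≤ ww φ (fun i => mn κ (x i) (y i)) ^ 2 := by
    rw [ww, Set.indicator_of_mem (show x ∈ {x : Fin n → ℝ | ∀ i, 0 < x i} from hx),
      Set.indicator_of_mem (show y ∈ {x : Fin n → ℝ | ∀ i, 0 < x i} from hy),
      Set.indicator_of_mem (show (fun i => mn κ (x i) (y i)) ∈ {x : Fin n → ℝ | ∀ i, 0 < x i} from hm),
      ← ENNReal.ofReal_mul (Real.exp_pos _).le, ← ENNReal.ofReal_pow (Real.exp_pos _).le]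
    refine ENNReal.ofReal_le_ofReal ?_
    rw [← Real.exp_add, ← Real.exp_nat_mul]
    refine Real.exp_le_exp.2 ?_
    have h := hc.2 (x := fun i => x i ^ κ⁻¹) (fun i => Real.rpow_nonneg (hx i).le _)
      (y := fun i => y i ^ κ⁻¹) (fun i => Real.rpow_nonneg (hy i).le _)
      (show (0:ℝ) ≤ 1/2 by norm_num) (show (0:ℝ) ≤ 1/2 by norm_num) (by norm_num)
    have e1 : (fun i => (x i ^ κ⁻¹) ^ κ) = x := by
      ext i; exact Real.rpow_inv_rpow (hx i).le (by linarith)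
    have e2 : (fun i => (y i ^ κ⁻¹) ^ κ) = y := by
      ext i; exact Real.rpow_inv_rpow (hy i).le (by linarith)
    have e3 : (fun i => (((1/2:ℝ) • (fun i => x i ^ κ⁻¹) + (1/2:ℝ) • fun i => y i ^ κ⁻¹) i) ^ κ) =
        fun i => mn κ (x i) (y i) := by
      ext i
      simp only [mn, Pi.add_apply, Pi.smul_apply, smul_eq_mul]
      congr 1; ring
    simp only [e1, e2, e3, smul_eq_mul] at h
    push_cast
    linarith
  calc (ww φ * F) x * (ww φ * G) y * ∏ i, ENNReal.ofReal (kk κ (x i) (y i))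
      = (ww φ x * ww φ y) * (F x * G y * ∏ i, ENNReal.ofReal (kk κ (x i) (y i))) := by
        simp only [Pi.mul_apply]; ring
    _ ≤ ww φ (fun i => mn κ (x i) (y i)) ^ 2 * H (fun i => mn κ (x i) (y i)) ^ 2 :=
        mul_le_mul' hww (hFGH x y hx hy)
    _ = _ := by simp only [Pi.mul_apply]; ring

theorem fourth (κ : ℝ) (hκ : 1 < κ) {n : ℕ} {Ω : Type} [MeasureSpace Ω]
    [IsProbabilityMeasure (ℙ : Measure Ω)]
    (X : Ω → Fin n → ℝ) (φ : (Fin n → ℝ) → ℝ) (hX : Measurable X)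
    (hmap : Measure.map X ℙ = (volume : Measure (Fin n → ℝ)).withDensity
          (fun x => ENNReal.ofReal (Real.exp (-φ x))))
    (hu : ∀ ε : Fin n → ℝ, (∀ i, ε i = 1 ∨ ε i = -1) → ∀ x, φ (fun i => ε i * x i) = φ x)
    (hc : ConvexOn ℝ {x : Fin n → ℝ | ∀ i, 0 ≤ x i} (fun x => φ (fun i => x i ^ κ)))
    (j : Fin n) (hj : ∫ ω, X ω j * X ω j ∂ℙ = 1) :
    Integrable (fun ω => X ω j ^ 4) ℙ ∧ ∫ ω, X ω j ^ 4 ≤ ((2 ^ κ) ^ 2) ^ 2 := by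
  have hint : Integrable (fun ω => X ω j * X ω j) ℙ := by
    by_contra h
    rw [integral_undef h] at hj
    norm_num at hj
  have h2 : ∫⁻ ω, ENNReal.ofReal (X ω j * X ω j) = 1 := by
    rw [← ofReal_integral_eq_lintegral_ofReal hint
      (Filter.Eventually.of_forall fun ω => mul_self_nonneg _), hj]; simp
  have hXj : Measurable fun ω => X ω j := (measurable_pi_apply j).comp hX
  have key := core κ hκ X φ hX hmap hu hc (fun x => ENNReal.ofReal (x j ^ 4)) (fun _ => 1)
    (fun x => ENNReal.ofReal ((2 ^ κ) ^ 2 * x j ^ 2)) (by fun_prop) (by fun_prop) (by fun_prop) (by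
      intro x y hx hy
      have p1 : ∏ i, ENNReal.ofReal (kk κ (x i) (y i)) ≤ 1 :=
        Finset.prod_le_one' fun i _ => ENNReal.ofReal_le_one.2 (kk_le_one κ _ _ hκ (hx i) (hy i))
      refine (mul_le_mul' le_rfl p1).trans ?_
      rw [mul_one, mul_one, ← ENNReal.ofReal_pow (by positivity)]
      refine ENNReal.ofReal_le_ofReal ?_
      have := le_mn κ (x j) (y j) hκ (hx j) (hy j)
      have := pow_le_pow_left₀ (hx j).le this 4
      refine this.trans (le_of_eq ?_)
      ring)
  have e1 : ∀ ω, |X ω j| ^ 4 = X ω j ^ 4 := fun ω => by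
    rw [show 4 = 2 * 2 by norm_num, pow_mul, pow_mul, sq_abs]
  have e2 : ∫⁻ ω, ENNReal.ofReal ((2 ^ κ) ^ 2 * |X ω j| ^ 2) = ENNReal.ofReal ((2 ^ κ) ^ 2) := by
    have : ∀ ω, ENNReal.ofReal ((2 ^ κ) ^ 2 * |X ω j| ^ 2) =
        ENNReal.ofReal ((2 ^ κ) ^ 2) * ENNReal.ofReal (X ω j * X ω j) := fun ω => by
      rw [← ENNReal.ofReal_mul (by positivity), sq_abs, sq (X ω j)]
    simp only [this]
    rw [lintegral_const_mul _ (by fun_prop), h2, mul_one]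
  simp only [e1, e2, lintegral_const, measure_univ, mul_one] at key
  rw [← ENNReal.ofReal_pow (by positivity)] at key
  have nn : 0 ≤ᵐ[ℙ] fun ω => X ω j ^ 4 := Filter.Eventually.of_forall fun ω => by positivity
  have hi : Integrable (fun ω => X ω j ^ 4) ℙ := by
    refine ⟨by fun_prop, ?_⟩
    rw [hasFiniteIntegral_iff_ofReal nn]
    exact key.trans_lt ENNReal.ofReal_lt_top
  refine ⟨hi, ?_⟩
  rw [← ofReal_integral_eq_lintegral_ofReal hi nn] at key
  exact (ENNReal.ofReal_le_ofReal_iff (by positivity)).1 key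

theorem trunc_var (κ : ℝ) (hκ : 1 < κ) {n : ℕ} {Ω : Type} [MeasureSpace Ω]
    [IsProbabilityMeasure (ℙ : Measure Ω)]
    (X : Ω → Fin n → ℝ) (φ : (Fin n → ℝ) → ℝ) (hX : Measurable X)
    (hmap : Measure.map X ℙ = (volume : Measure (Fin n → ℝ)).withDensity
          (fun x => ENNReal.ofReal (Real.exp (-φ x))))
    (hu : ∀ ε : Fin n → ℝ, (∀ i, ε i = 1 ∨ ε i = -1) → ∀ x, φ (fun i => ε i * x i) = φ x)
    (hc : ConvexOn ℝ {x : Fin n → ℝ | ∀ i, 0 ≤ x i} (fun x => φ (fun i => x i ^ κ)))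
    (a : Fin n → ℝ) (N : ℝ) (hN : 0 ≤ N) :
    variance (fun ω => ∑ j, a j ^ 2 * min (X ω j ^ 2) N) ℙ ≤
      2 * ∫ ω, ∑ j, ((2 ^ (2 * κ) + 2 * κ) ^ 2 / (8 * (κ - 1))) *
        (a j ^ 4 * (min (X ω j ^ 2) N) ^ 2) := by
  have hXj : ∀ j, Measurable fun ω => X ω j := fun j => (measurable_pi_apply j).comp hX
  set D : ℝ := (2 ^ (2 * κ) + 2 * κ) ^ 2 / (8 * (κ - 1)) with hD
  have hk1 : 0 < κ - 1 := by linarith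
  have hD0 : 0 ≤ D := by positivity
  have t0 : ∀ x : ℝ, 0 ≤ min (x ^ 2) N := fun x => le_min (sq_nonneg _) hN
  have tN : ∀ x : ℝ, min (x ^ 2) N ≤ N := fun x => min_le_right _ _
  refine calculus _ _ (by fun_prop) (by fun_prop)
    (max (∑ j, a j ^ 2 * N) (∑ j, D * (a j ^ 4 * N ^ 2))) ?_ ?_ ?_
  · intro ω
    refine le_trans ?_ (le_max_left _ _)
    rw [abs_of_nonneg (Finset.sum_nonneg fun j _ => mul_nonneg (sq_nonneg _) (t0 _))]
    exact Finset.sum_le_sum fun j _ => mul_le_mul_of_nonneg_left (tN _) (sq_nonneg _)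
  · intro ω
    refine le_trans ?_ (le_max_right _ _)
    rw [abs_of_nonneg (Finset.sum_nonneg fun j _ => by positivity)]
    refine Finset.sum_le_sum fun j _ => ?_
    have := pow_le_pow_left₀ (t0 (X ω j)) (tN (X ω j)) 2
    gcongr
  · intro s hs
    have key := core κ hκ X φ hX hmap hu hc
      (fun x => ENNReal.ofReal (Real.exp (s * ∑ j, a j ^ 2 * min (x j ^ 2) N)))
      (fun x => ENNReal.ofReal (Real.exp (-(s * ∑ j, a j ^ 2 * min (x j ^ 2) N))))
      (fun x => ENNReal.ofReal (Real.exp (s ^ 2 * ∑ j, D * (a j ^ 4 * (min (x j ^ 2) N) ^ 2))))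
      (by fun_prop) (by fun_prop) (by fun_prop) (by
        intro x y hx hy
        rw [← ENNReal.ofReal_prod_of_nonneg fun i _ => kk_nonneg κ _ _ (hx i) (hy i),
          ← ENNReal.ofReal_mul (Real.exp_pos _).le, ← ENNReal.ofReal_mul (by positivity),
          ← ENNReal.ofReal_pow (Real.exp_pos _).le]
        refine ENNReal.ofReal_le_ofReal ?_
        rw [Finset.mul_sum, Finset.mul_sum, Finset.mul_sum, ← Finset.sum_neg_distrib, Real.exp_sum,
          Real.exp_sum, Real.exp_sum, ← Finset.prod_mul_distrib, ← Finset.prod_mul_distrib,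
          ← Finset.prod_pow]
        refine Finset.prod_le_prod (fun i _ => mul_nonneg (by positivity)
          (kk_nonneg κ _ _ (hx i) (hy i))) fun i _ => ?_
        have := scalar_ineq κ (x i) (y i) N (s * a i ^ 2) hκ (hx i) (hy i) hN (by positivity)
        rw [mul_assoc s, mul_assoc s] at this
        refine this.trans (le_of_eq ?_)
        rw [← Real.exp_nat_mul]
        congr 1
        rw [hD]
        push_cast
        field_simp
        ring)
    simpa only [sq_abs] using key

theorem var_weighted_sq_le (κ : ℝ) (hκ : 1 < κ) :
    ∃ C : ℝ, 0 < C ∧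
      ∀ (n : ℕ) (Ω : Type) [MeasureSpace Ω] [IsProbabilityMeasure (ℙ : Measure Ω)]
        (X : Ω → Fin n → ℝ) (φ : (Fin n → ℝ) → ℝ),
        Measurable X →
        -- e^{-φ} is a probability density
        IsProbabilityMeasure ((volume : Measure (Fin n → ℝ)).withDensity
          (fun x => ENNReal.ofReal (Real.exp (-φ x)))) →
        -- X has density e^{-φ(x)}
        Measure.map X ℙ = (volume : Measure (Fin n → ℝ)).withDensity
          (fun x => ENNReal.ofReal (Real.exp (-φ x))) →
        -- the density is unconditional
        (∀ ε : Fin n → ℝ, (∀ i, ε i = 1 ∨ ε i = -1) →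
          ∀ x, φ (fun i => ε i * x i) = φ x) →
        -- X is isotropic
        (∀ i, ∫ ω, X ω i ∂ℙ = 0) →
        (∀ i j, ∫ ω, X ω i * X ω j ∂ℙ = if i = j then 1 else 0) →
        -- φ(x₁^κ, …, xₙ^κ) is convex on the positive orthant
        ConvexOn ℝ {x : Fin n → ℝ | ∀ i, 0 ≤ x i} (fun x => φ (fun i => x i ^ κ)) →
        ∀ a : Fin n → ℝ,
          variance (fun ω => ∑ j, (a j) ^ 2 * (X ω j) ^ 2) ℙ ≤ C * ∑ j, |a j| ^ 4 := by
  have hk1 : 0 < κ - 1 := by linarith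
  refine ⟨2 * ((2 ^ (2 * κ) + 2 * κ) ^ 2 / (8 * (κ - 1)) * ((2 ^ κ) ^ 2) ^ 2), by positivity, ?_⟩
  intro n Ω _ _ X φ hX _ hmap hu _ hcov hc a
  have hXj : ∀ j, Measurable fun ω => X ω j := fun j => (measurable_pi_apply j).comp hX
  have h4 : ∀ j, Integrable (fun ω => X ω j ^ 4) ℙ ∧ ∫ ω, X ω j ^ 4 ≤ ((2 ^ κ) ^ 2) ^ 2 := fun j =>
    fourth κ hκ X φ hX hmap hu hc j (by simpa using hcov j j)
  set D : ℝ := (2 ^ (2 * κ) + 2 * κ) ^ 2 / (8 * (κ - 1)) with hD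
  have hD0 : 0 ≤ D := by positivity
  have bound : ∀ N : ℕ, variance (fun ω => ∑ j, a j ^ 2 * min (X ω j ^ 2) (N : ℝ)) ℙ ≤
      2 * (D * ((2 ^ κ) ^ 2) ^ 2) * ∑ j, |a j| ^ 4 := by
    intro N
    refine (trunc_var κ hκ X φ hX hmap hu hc a N (Nat.cast_nonneg N)).trans ?_
    rw [← hD, mul_assoc]
    refine mul_le_mul_of_nonneg_left ?_ (by norm_num)
    have i4 : Integrable (fun ω => ∑ j, D * (a j ^ 4 * X ω j ^ 4)) ℙ :=
      integrable_finset_sum _ fun j _ => ((h4 j).1.const_mul _).const_mul _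
    have s1 : ∫ ω, ∑ j, D * (a j ^ 4 * (min (X ω j ^ 2) (N:ℝ)) ^ 2) ≤
        ∫ ω, ∑ j, D * (a j ^ 4 * X ω j ^ 4) := by
      refine integral_mono_of_nonneg (Filter.Eventually.of_forall fun ω =>
        Finset.sum_nonneg fun j _ => by positivity) i4 (Filter.Eventually.of_forall fun ω => ?_)
      refine Finset.sum_le_sum fun j _ => ?_
      have h0 : 0 ≤ min (X ω j ^ 2) (N:ℝ) := le_min (sq_nonneg _) (Nat.cast_nonneg N)
      have := pow_le_pow_left₀ h0 (min_le_left (X ω j ^ 2) (N:ℝ)) 2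
      rw [← pow_mul] at this
      exact mul_le_mul_of_nonneg_left (mul_le_mul_of_nonneg_left this (by positivity)) hD0
    refine s1.trans ?_
    rw [integral_finset_sum _ fun j _ => ((h4 j).1.const_mul _).const_mul _, Finset.mul_sum]
    refine Finset.sum_le_sum fun j _ => ?_
    rw [integral_const_mul, integral_const_mul]
    have ea : |a j| ^ 4 = a j ^ 4 := by
      rw [show 4 = 2 * 2 by norm_num, pow_mul, pow_mul, sq_abs]
    rw [ea]
    have := mul_le_mul_of_nonneg_left (h4 j).2 (show 0 ≤ D * a j ^ 4 by positivity)
    linarith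
  -- limit
  set g : Ω → ℝ := fun ω => ∑ j, a j ^ 2 * X ω j ^ 2 with hg
  set gN : ℕ → Ω → ℝ := fun N ω => ∑ j, a j ^ 2 * min (X ω j ^ 2) (N : ℝ) with hgN
  have mg : Measurable g := by fun_prop
  have mgN : ∀ N, Measurable (gN N) := fun N => by fun_prop
  have gN0 : ∀ N ω, 0 ≤ gN N ω := fun N ω => Finset.sum_nonneg fun j _ =>
    mul_nonneg (sq_nonneg _) (le_min (sq_nonneg _) (Nat.cast_nonneg N))
  have gNg : ∀ N ω, gN N ω ≤ g ω := fun N ω => Finset.sum_le_sum fun j _ =>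
    mul_le_mul_of_nonneg_left (min_le_left _ _) (sq_nonneg _)
  have L2 : MemLp g 2 ℙ := by
    refine memLp_finset_sum _ fun j _ => MemLp.const_mul ?_ _
    rw [memLp_two_iff_integrable_sq (by fun_prop)]
    have := (h4 j).1
    simpa only [← pow_mul] using this
  have L2N : ∀ N, MemLp (gN N) 2 ℙ := fun N => L2.mono (mgN N).aestronglyMeasurable
    (Filter.Eventually.of_forall fun ω => by
      rw [Real.norm_of_nonneg (gN0 N ω), Real.norm_of_nonneg ((gN0 N ω).trans (gNg N ω))]
      exact gNg N ω)
  have pt : ∀ ω, Filter.Tendsto (fun N => gN N ω) Filter.atTop (nhds (g ω)) := by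
    intro ω
    refine tendsto_finset_sum _ fun j _ => Filter.Tendsto.const_mul _ ?_
    refine tendsto_const_nhds.congr' ?_
    obtain ⟨N0, hN0⟩ := exists_nat_ge (X ω j ^ 2)
    filter_upwards [Filter.eventually_ge_atTop N0] with N hN
    exact (min_eq_left (hN0.trans (by exact_mod_cast hN))).symm
  have T1 : Filter.Tendsto (fun N => ∫ ω, gN N ω) Filter.atTop (nhds (∫ ω, g ω)) := by
    refine tendsto_integral_of_dominated_convergence g (fun N => (mgN N).aestronglyMeasurable)
      (L2.integrable (by norm_num)) (fun N => Filter.Eventually.of_forall fun ω => ?_)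
      (Filter.Eventually.of_forall pt)
    rw [Real.norm_of_nonneg (gN0 N ω)]; exact gNg N ω
  have T2 : Filter.Tendsto (fun N => ∫ ω, (gN N ^ 2) ω) Filter.atTop (nhds (∫ ω, (g ^ 2) ω)) := by
    refine tendsto_integral_of_dominated_convergence (fun ω => g ω ^ 2)
      (fun N => ((mgN N).pow_const 2).aestronglyMeasurable)
      L2.integrable_sq (fun N => Filter.Eventually.of_forall fun ω => ?_)
      (Filter.Eventually.of_forall fun ω => (pt ω).pow 2)
    rw [Pi.pow_apply, Real.norm_of_nonneg (sq_nonneg _)]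
    exact pow_le_pow_left₀ (gN0 N ω) (gNg N ω) 2
  have T3 : Filter.Tendsto (fun N => variance (gN N) ℙ) Filter.atTop (nhds (variance g ℙ)) := by
    rw [variance_eq_sub L2]
    simp only [fun N => variance_eq_sub (L2N N)]
    exact T2.sub (T1.pow 2)
  exact le_of_tendsto' T3 bound
end

section
/- For all t ∈ [0,1] and all c ∈ [1,4], the inequality (1−t)² + t²c − c^t ≤ 0 holds. Consequently, for any 0 < a ≤ b ≤ 4a and any x,y ∈ [a,b] and t ∈ [0,1], log((1−t)²x + t²y) ≤ (1−t)log x + t log y. -/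
open Real

lemma aux_poly (t d : ℝ) (h0 : 0 ≤ t) (h1 : t ≤ 1) (d1 : 1 ≤ d) (d2 : d ≤ 2) :
    ((1 - t) ^ 2 + t ^ 2 * d ^ 2) * (d * (1 - t) + t) ^ 2 ≤ d ^ 2 := by
  have hs : 0 ≤ 1 - t := by linarith
  have e : d ^ 2 - ((1 - t) ^ 2 + t ^ 2 * d ^ 2) * (d * (1 - t) + t) ^ 2 =
      (1 - t) ^ 3 * t * (2 * d * (2 * d - 1)) +
      (1 - t) ^ 2 * t ^ 2 * (d ^ 2 * ((2 - d) * (2 + d)) + (2 * d ^ 2 - 1)) +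
      (1 - t) * t ^ 3 * (2 * d ^ 2 * (2 - d)) := by ring
  have a1 : 0 ≤ 2 - d := by linarith
  have a2 : 0 ≤ 2 * d - 1 := by linarith
  have a3 : 0 ≤ 2 * d ^ 2 - 1 := by nlinarith
  have a4 : 0 ≤ d := by linarith
  have : 0 ≤ d ^ 2 - ((1 - t) ^ 2 + t ^ 2 * d ^ 2) * (d * (1 - t) + t) ^ 2 := by
    rw [e]; positivity
  linarith

lemma aux_pow (t c : ℝ) (h0 : 0 ≤ t) (h1 : t ≤ 1) (c1 : 1 ≤ c) (c4 : c ≤ 4) :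
    (1 - t) ^ 2 + t ^ 2 * c ≤ c ^ t := by
  obtain ⟨d, hd, rfl⟩ : ∃ d : ℝ, 0 < d ∧ c = d ^ 2 :=
    ⟨√c, Real.sqrt_pos.2 (by linarith), (Real.sq_sqrt (by linarith)).symm⟩
  have d1 : 1 ≤ d := by nlinarith
  have d2 : d ≤ 2 := by nlinarith
  have hp := aux_poly t d h0 h1 d1 d2
  have hs : 0 ≤ 1 - t := by linarith
  have g := Real.geom_mean_le_arith_mean2_weighted hs h0 zero_le_one
    (inv_nonneg.2 hd.le) (by ring)
  rw [Real.one_rpow, one_mul, Real.inv_rpow hd.le] at g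
  have hdt : 0 < d ^ t := Real.rpow_pos_of_pos hd t
  have e : (d ^ 2) ^ t = (d ^ t) ^ 2 := by
    rw [pow_two, Real.mul_rpow hd.le hd.le, pow_two]
  rw [e]
  have g2 : d ≤ d ^ t * (d * (1 - t) + t) := by
    have := mul_le_mul_of_nonneg_left g (mul_pos hd hdt).le
    field_simp at this
    linarith
  have hq : 0 < d * (1 - t) + t := by nlinarith
  have g3 : d ^ 2 ≤ (d ^ t) ^ 2 * (d * (1 - t) + t) ^ 2 := by
    rw [← mul_pow]; gcongr
  exact le_of_mul_le_mul_right (hp.trans g3) (by positivity)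

lemma aux_log (x y t : ℝ) (hx : 0 < x) (hxy : x ≤ y) (hy : y ≤ 4 * x) (h0 : 0 ≤ t)
    (h1 : t ≤ 1) : Real.log ((1 - t) ^ 2 * x + t ^ 2 * y) ≤
          (1 - t) * Real.log x + t * Real.log y := by
  have hy0 : 0 < y := by linarith
  have h := aux_pow t (y / x) h0 h1 ((one_le_div hx).2 hxy) ((div_le_iff₀ hx).2 hy)
  have hpos : 0 < (1 - t) ^ 2 + t ^ 2 * (y / x) := by
    rcases h0.eq_or_lt with h | h
    · subst h; norm_num
    · positivity
  have e : (1 - t) ^ 2 * x + t ^ 2 * y = x * ((1 - t) ^ 2 + t ^ 2 * (y / x)) := by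
    field_simp
  have hl := Real.log_le_log hpos h
  rw [Real.log_rpow (by positivity), Real.log_div hy0.ne' hx.ne'] at hl
  rw [e, Real.log_mul hx.ne' hpos.ne']
  linarith

/-- `(1-t)² + t²c - c^t ≤ 0` for `t ∈ [0,1]`, `c ∈ [1,4]`; consequently the logarithm is
`(1/2)`-convex on any interval `[a,b] ⊆ [a,4a]`. -/
theorem pow_ineq_and_log_half_convex :
    (∀ t : ℝ, t ∈ Set.Icc (0:ℝ) 1 → ∀ c : ℝ, c ∈ Set.Icc (1:ℝ) 4 →
      (1 - t) ^ 2 + t ^ 2 * c - c ^ t ≤ 0) ∧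
    (∀ a b : ℝ, 0 < a → a ≤ b → b ≤ 4 * a →
      ∀ x ∈ Set.Icc a b, ∀ y ∈ Set.Icc a b, ∀ t ∈ Set.Icc (0:ℝ) 1,
        Real.log ((1 - t) ^ 2 * x + t ^ 2 * y) ≤
          (1 - t) * Real.log x + t * Real.log y) := by
  constructor
  · rintro t ⟨h0, h1⟩ c ⟨c1, c4⟩
    linarith [aux_pow t c h0 h1 c1 c4]
  · rintro a b ha hab hb x ⟨x1, x2⟩ y ⟨y1, y2⟩ t ⟨h0, h1⟩
    rcases le_total x y with h | h
    · exact aux_log x y t (by linarith) h (by linarith) h0 h1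
    · have := aux_log y x (1 - t) (by linarith) h (by linarith) (by linarith) (by linarith)
      rw [sub_sub_cancel, add_comm] at this
      linarith
end
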